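/- arXiv:1505.05976 — 2 statements merged into one kernel-verified Lean document; each statement's English description precedes it below -/
import Mathlib

section
/- Let K be a subfield of ℂ, n ≥ 3, N = n if n is odd and N = 2n if n is even, ζ ∈ ℂ a primitive N-th root of unity, and r ∈ K nonzero. Let A = [[a, b], [c, d]] be an invertible 2×2 matrix with entries in K satisfying a + d = r(ζ + ζ⁻¹) and ad − bc = r². Let f₁ ∈ K[X] be irreducible of degree n with root x₁ ∈ ℂ, and suppose the iterated Möbius transforms x_j = A^{j−1}∘x₁ are defined (all denominators nonzero) for j = 1, …, n and are each roots of f₁. Then x₁, x₂, …, x_n are pairwise distinct. -/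
/-!
If `A^i ∘ z = A^(i+m) ∘ z`, then `z` is fixed by `A^m`, so it is a root of a polynomial of degree
at most two with coefficients in `K`. If `z` has degree at least three over `K`, this polynomial
vanishes, which says that `A^m` is scalar; the eigenvalues `rζ` and `rζ⁻¹` of `A` then have the
same `m`-th power. Their ratio `ζ²` is a primitive `n`-th root of unity, so `n ∣ m`.
-/

open Polynomial
open Matrix.GeneralLinearGroup (fixpointPolynomial)

section Eigenvalues

lemma pow_eq_of_mem_spectrum_of_pow_eq_algebraMap {F R : Type*} [Field F] [Ring R] [Algebra F R]
    [Nontrivial R] {x : R} {μ s : F} {m : ℕ} (hμ : μ ∈ spectrum F x)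
    (hx : x ^ m = algebraMap F R s) : μ ^ m = s := by
  simpa only [hx, spectrum.scalar_eq, Set.mem_singleton_iff] using spectrum.pow_mem_pow x m hμ

variable {F : Type*} [Field F] {A : Matrix (Fin 2) (Fin 2) F} {μ ν : F}

lemma mem_spectrum_of_trace_eq_add_of_det_eq_mul (htr : A.trace = μ + ν) (hdet : A.det = μ * ν) :
    μ ∈ spectrum F A := by
  rw [Matrix.mem_spectrum_iff_isRoot_charpoly, Matrix.charpoly_fin_two, htr, hdet]
  simp only [IsRoot.def, eval_add, eval_sub, eval_mul, eval_pow, eval_X, eval_C]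
  ring

lemma pow_eq_pow_of_pow_mem_range_scalar (htr : A.trace = μ + ν) (hdet : A.det = μ * ν) {m : ℕ}
    (hA : A ^ m ∈ Set.range (Matrix.scalar (Fin 2))) : μ ^ m = ν ^ m := by
  obtain ⟨s, hs⟩ := hA
  have hμ : μ ∈ spectrum F A := mem_spectrum_of_trace_eq_add_of_det_eq_mul htr hdet
  have hν : ν ∈ spectrum F A :=
    mem_spectrum_of_trace_eq_add_of_det_eq_mul (htr.trans (add_comm μ ν))
      (hdet.trans (mul_comm μ ν))
  exact (pow_eq_of_mem_spectrum_of_pow_eq_algebraMap hμ hs.symm).trans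
    (pow_eq_of_mem_spectrum_of_pow_eq_algebraMap hν hs.symm).symm

end Eigenvalues

lemma natDegree_fixpointPolynomial_le {R : Type*} [CommRing R] (g : GL (Fin 2) R) :
    g.fixpointPolynomial.natDegree ≤ 2 := by
  rw [fixpointPolynomial, sub_eq_add_neg, ← C_neg]
  exact natDegree_quadratic_le

lemma fixpointPolynomial_map {R S : Type*} [CommRing R] [CommRing S] (φ : R →+* S)
    (g : GL (Fin 2) R) :
    (g.map φ).fixpointPolynomial = g.fixpointPolynomial.map φ := by
  simp [fixpointPolynomial]

section FieldExtension

variable {K L : Type*} [Field K] [Field L] [Algebra K L] {z : L}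

lemma natDegree_le_of_irreducible_of_aeval_eq_zero {f p : K[X]} (hf : Irreducible f)
    (hfz : aeval z f = 0) (hp : p ≠ 0) (hpz : aeval z p = 0) : f.natDegree ≤ p.natDegree := by
  have hdvd : minpoly K z ∣ p := minpoly.dvd K z hpz
  rw [← minpoly.eq_of_irreducible hf hfz] at hdvd
  exact natDegree_le_of_dvd (dvd_of_mul_right_dvd hdvd) hp

variable [DecidableEq L]

lemma mem_range_scalar_of_map_smul_eq_self
    (hz : ∀ p : K[X], p ≠ 0 → aeval z p = 0 → 2 < p.natDegree)
    {g : GL (Fin 2) K} (hg : g.map (algebraMap K L) • (z : OnePoint L) = z) :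
    g.val ∈ Set.range (Matrix.scalar (Fin 2)) := by
  rw [← Matrix.GeneralLinearGroup.fixpointPolynomial_aeval_eq_zero_iff, fixpointPolynomial_map,
    aeval_map_algebraMap] at hg
  rw [← Matrix.GeneralLinearGroup.fixpointPolynomial_eq_zero_iff]
  by_contra hne
  exact (hz _ hne hg).not_ge (natDegree_fixpointPolynomial_le g)

lemma div_pow_eq_div_pow_of_map_pow_smul_eq
    (hz : ∀ p : K[X], p ≠ 0 → aeval z p = 0 → 2 < p.natDegree) {g : GL (Fin 2) K} {μ ν : L}
    (htr : (g.map (algebraMap K L)).val.trace = μ + ν)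
    (hdet : (g.map (algebraMap K L)).val.det = μ * ν) {i j : ℕ}
    (hij : g.map (algebraMap K L) ^ i • (z : OnePoint L) =
      g.map (algebraMap K L) ^ j • (z : OnePoint L)) :
    (μ / ν) ^ i = (μ / ν) ^ j := by
  wlog hle : i ≤ j generalizing i j
  · exact (this hij.symm (le_of_not_ge hle)).symm
  obtain ⟨m, rfl⟩ := Nat.exists_eq_add_of_le hle
  have hfix : (g ^ m).map (algebraMap K L) • (z : OnePoint L) = z := by
    rw [pow_add, mul_smul, smul_left_cancel_iff] at hij
    rw [map_pow, ← hij]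
  have hscalar : (g.map (algebraMap K L)).val ^ m ∈ Set.range (Matrix.scalar (Fin 2)) := by
    obtain ⟨s, hs⟩ := mem_range_scalar_of_map_smul_eq_self hz hfix
    refine ⟨algebraMap K L s, ?_⟩
    rw [← Units.val_pow_eq_pow_val, ← map_pow, Matrix.GeneralLinearGroup.val_map_apply, ← hs,
      Matrix.scalar_apply, Matrix.scalar_apply, Matrix.diagonal_map (map_zero _)]
  have hν : ν ≠ 0 := right_ne_zero_of_mul (hdet ▸ (g.map (algebraMap K L)).det_ne_zero)
  have hpow : (μ / ν) ^ m = 1 := by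
    rw [div_pow, pow_eq_pow_of_pow_mem_range_scalar htr hdet hscalar, div_self (pow_ne_zero m hν)]
  rw [pow_add, hpow, mul_one]

end FieldExtension

lemma isPrimitiveRoot_sq_of_eq_ite {R : Type*} [CommMonoid R] {ζ : R} {n N : ℕ} (hn : n ≠ 0)
    (hN : N = if Odd n then n else 2 * n) (hζ : IsPrimitiveRoot ζ N) :
    IsPrimitiveRoot (ζ ^ 2) n := by
  split_ifs at hN with hodd
  · exact (hN ▸ hζ).pow_of_coprime 2 (Nat.coprime_two_left.mpr hodd)
  · exact hζ.pow (by lia) hN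

theorem stmt3_general {K L : Type*} [Field K] [Field L] [Algebra K L] {n : ℕ} {ζ r : L}
    (hζ : IsPrimitiveRoot (ζ ^ 2) n) (hr : r ≠ 0) (A : Matrix (Fin 2) (Fin 2) K)
    (htr : algebraMap K L A.trace = r * (ζ + ζ⁻¹)) (hdet : algebraMap K L A.det = r ^ 2)
    {x₁ : L} (hx₁ : ∀ p : K[X], p ≠ 0 → aeval x₁ p = 0 → 2 < p.natDegree)
    {M : Matrix (Fin 2) (Fin 2) L} (hM : M = A.map (algebraMap K L)) {x : ℕ → L}
    (hden : ∀ j < n, (M ^ j) 1 0 * x₁ + (M ^ j) 1 1 ≠ 0)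
    (hx : ∀ j < n,
      x j = ((M ^ j) 0 0 * x₁ + (M ^ j) 0 1) / ((M ^ j) 1 0 * x₁ + (M ^ j) 1 1)) :
    ∀ j < n, ∀ k < n, x j = x k → j = k := by
  classical
  intro j hj k hk hjk
  have hζ0 : ζ ≠ 0 := fun h ↦ hζ.ne_zero (by lia) (by simp [h])
  have hA : A.det ≠ 0 := fun h ↦ hr (by simpa [h] using hdet.symm)
  let g : GL (Fin 2) K := Matrix.GeneralLinearGroup.mkOfDetNeZero A hA
  have hgM : (g.map (algebraMap K L)).val = M := hM.symm
  have hcoe : ∀ i < n, g.map (algebraMap K L) ^ i • (x₁ : OnePoint L) = (x i : OnePoint L) := by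
    intro i hi
    rw [OnePoint.smul_some_eq_ite, Units.val_pow_eq_pow_val, hgM, if_neg (hden i hi), hx i hi]
  have htrM : (g.map (algebraMap K L)).val.trace = r * ζ + r * ζ⁻¹ := by
    rw [hgM, hM, ← mul_add, ← htr, AddMonoidHom.map_trace]
  have hdetM : (g.map (algebraMap K L)).val.det = r * ζ * (r * ζ⁻¹) := by
    rw [hgM, hM, ← RingHom.mapMatrix_apply, ← RingHom.map_det, hdet]
    field
  have hratio : r * ζ / (r * ζ⁻¹) = ζ ^ 2 := by field
  have hpow := div_pow_eq_div_pow_of_map_pow_smul_eq hx₁ htrM hdetM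
    ((hcoe j hj).trans ((congrArg _ hjk).trans (hcoe k hk).symm))
  rw [hratio] at hpow
  exact hζ.pow_inj hj hk hpow

/-- With `K ⊆ ℂ`, `n ≥ 3`, `N`, a primitive `N`-th root of unity `ζ`,
`r ∈ K` nonzero, and an invertible matrix `A = [[a,b],[c,d]]` over `K` with
`a + d = r(ζ + ζ⁻¹)` and `ad - bc = r²`: if `f₁ ∈ K[X]` is irreducible of degree `n` with
root `x₁`, and the iterated Möbius transforms `x j = A^j ∘ x₁` are defined for `j < n` and
are roots of `f₁`, then `x 0, …, x (n-1)` are pairwise distinct. -/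
theorem stmt3 (K : Subfield ℂ) (n : ℕ) (hn : 3 ≤ n) (N : ℕ)
    (hN : N = if Odd n then n else 2 * n) (ζ : ℂ) (hζ : IsPrimitiveRoot ζ N)
    (r : K) (hr : r ≠ 0) (a b c d : K)
    (htr : ((a : ℂ) + (d : ℂ)) = (r : ℂ) * (ζ + ζ⁻¹))
    (hdet : a * d - b * c = r ^ 2)
    (f₁ : Polynomial K) (hirr : Irreducible f₁) (hdeg : f₁.natDegree = n)
    (x₁ : ℂ) (hx₁ : Polynomial.aeval x₁ f₁ = 0)
    (M : Matrix (Fin 2) (Fin 2) ℂ) (hM : M = !![(a : ℂ), (b : ℂ); (c : ℂ), (d : ℂ)])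
    (x : ℕ → ℂ)
    (hden : ∀ j < n, (M ^ j) 1 0 * x₁ + (M ^ j) 1 1 ≠ 0)
    (hx : ∀ j < n,
      x j = ((M ^ j) 0 0 * x₁ + (M ^ j) 0 1) / ((M ^ j) 1 0 * x₁ + (M ^ j) 1 1))
    (hroot : ∀ j < n, Polynomial.aeval (x j) f₁ = 0) :
    ∀ j < n, ∀ k < n, x j = x k → j = k := by
  have hdeg₁ : ∀ p : K[X], p ≠ 0 → aeval x₁ p = 0 → 2 < p.natDegree := fun p hp hpx ↦
    (hdeg ▸ hn).trans (natDegree_le_of_irreducible_of_aeval_eq_zero hirr hx₁ hp hpx)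
  have hMmap : M = !![a, b; c, d].map (algebraMap K ℂ) :=
    hM.trans (Matrix.eta_fin_two (!![a, b; c, d].map (algebraMap K ℂ))).symm
  exact stmt3_general (isPrimitiveRoot_sq_of_eq_ite (by lia) hN hζ) (r := (r : ℂ))
    (by exact_mod_cast hr) !![a, b; c, d] (by rw [Matrix.trace_fin_two_of]; exact htr)
    (by rw [Matrix.det_fin_two_of, hdet]; rfl) hdeg₁ hMmap hden hx
end

section
/- (Theorem 1) Let K be a subfield of ℂ, n ≥ 3, N = n if n is odd and N = 2n if n is even, ζ ∈ ℂ a primitive N-th root of unity, and r ∈ K nonzero. Let A ∈ GL(2, K) have trace r(ζ + ζ⁻¹) and determinant r². Let C ∈ K, let F = X + A∘X + A²∘X + ⋯ + A^{n−1}∘X + C in K(X), and let f₁ be a numerator polynomial of F. Suppose f₁ is irreducible over K and has degree n. Let x₁ ∈ ℂ be a root of f₁ and put x_j = A^{j−1}∘x₁ for j = 2, …, n. Then x₁, …, x_n are exactly the complex roots of f₁, the field K[x₁] is a Galois extension of K, and its Galois group is cyclic of order n, generated by the automorphism sending x₁ to x₂ = A∘x₁ (which acts on the roots as the n-cycle (x₁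 x₂ … x_n)). -/
/-!
`A` has order `n` in `PGL₂(K)`: its eigenvalues `rζ` and `rζ⁻¹` are distinct, so `A ^ j` is scalar
exactly when `(rζ) ^ j = (rζ⁻¹) ^ j`, i.e. `ζ ^ (2j) = 1`, i.e. `n ∣ j`. Hence `F` is invariant
under `X ↦ A ∘ X`, which therefore permutes the roots of `f₁`. A fixed point of a nonscalar `A ^ j`
is a zero of a nonzero polynomial of degree at most two, so as soon as `n ≥ 3` the orbit of `x₁`
consists of `n` different roots, hence of all of them. The conjugate `A ∘ x₁` of `x₁` lies in
`K(x₁)`, so `x₁ ↦ A ∘ x₁` extends to an automorphism of `K(x₁)`, whose order is the length `n` of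
the orbit, that is, the degree of `K(x₁)` over `K`.
-/

open Polynomial IntermediateField Finset

section QuadraticElement

theorem pow_mul_eq_pow_smul {R S : Type*} [CommSemiring R] [Semiring S] [Algebra R S]
    {a v : S} {α : R} (h : a * v = α • v) (j : ℕ) : a ^ j * v = α ^ j • v := by
  induction j with
  | zero => simp
  | succ j ih => rw [pow_succ, mul_assoc, h, mul_smul_comm, ih, smul_smul, pow_succ']

theorem sub_smul_pow_eq {R S : Type*} [CommRing R] [Ring S] [Algebra R S] {a : S} {α β : R}
    (h : (a - algebraMap R S α) * (a - algebraMap R S β) = 0) (j : ℕ) :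
    (α - β) • a ^ j =
      α ^ j • (a - algebraMap R S β) - β ^ j • (a - algebraMap R S α) := by
  have h' : (a - algebraMap R S β) * (a - algebraMap R S α) = 0 := by
    rw [← h]
    exact ((Commute.refl a).sub_right (Algebra.commute_algebraMap_right α a)).sub_left
      (Algebra.commute_algebraMap_left β _)
  have eigen_α : a * (a - algebraMap R S β) = α • (a - algebraMap R S β) := by
    rw [Algebra.smul_def, ← sub_eq_zero, ← sub_mul, h]
  have eigen_β : a * (a - algebraMap R S α) = β • (a - algebraMap R S α) := by
    rw [Algebra.smul_def, ← sub_eq_zero, ← sub_mul, h']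
  rw [← pow_mul_eq_pow_smul eigen_α, ← pow_mul_eq_pow_smul eigen_β, ← mul_sub,
    sub_sub_sub_cancel_left, ← map_sub, ← Algebra.commutes, ← Algebra.smul_def]

theorem pow_mem_bot_iff_of_sub_mul_sub_eq_zero {F S : Type*} [Field F] [Ring S] [Algebra F S]
    {a : S} (ha : a ∉ (⊥ : Subalgebra F S)) {α β : F} (hαβ : α ≠ β)
    (h : (a - algebraMap F S α) * (a - algebraMap F S β) = 0) (j : ℕ) :
    a ^ j ∈ (⊥ : Subalgebra F S) ↔ α ^ j = β ^ j := by
  let scalars : Submodule F S := Subalgebra.toSubmodule ⊥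
  change a ^ j ∈ scalars ↔ _
  have algebraMap_mem (c : F) : algebraMap F S c ∈ scalars := Subalgebra.algebraMap_mem ⊥ c
  have key : (α - β) • a ^ j = (α ^ j - β ^ j) • a +
      (β ^ j • algebraMap F S α - α ^ j • algebraMap F S β) := by
    rw [sub_smul_pow_eq h]
    module
  rw [← scalars.smul_mem_iff (sub_ne_zero.2 hαβ), key, scalars.add_mem_iff_left
    (scalars.sub_mem (scalars.smul_mem _ (algebraMap_mem α))
      (scalars.smul_mem _ (algebraMap_mem β)))]
  refine ⟨fun hmem ↦ ?_, fun heq ↦ by simp [heq]⟩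
  by_contra hne
  exact ha ((scalars.smul_mem_iff (sub_ne_zero.2 hne)).1 hmem)

end QuadraticElement

section ScalarMatrix

theorem matrix_fin_two_mem_bot_iff {R : Type*} [CommRing R] {B : Matrix (Fin 2) (Fin 2) R} :
    B ∈ (⊥ : Subalgebra R (Matrix (Fin 2) (Fin 2) R)) ↔
      B 0 1 = 0 ∧ B 1 0 = 0 ∧ B 0 0 = B 1 1 := by
  rw [Algebra.mem_bot]
  constructor
  · rintro ⟨c, rfl⟩
    simp [Matrix.algebraMap_matrix_apply]
  · rintro ⟨h01, h10, hdiag⟩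
    refine ⟨B 1 1, ?_⟩
    ext i k
    fin_cases i <;> fin_cases k <;> simp [Matrix.algebraMap_matrix_apply, h01, h10, hdiag]

theorem matrix_fin_two_map_mem_bot_iff {R S : Type*} [CommRing R] [CommRing S] [Algebra R S]
    [FaithfulSMul R S] {B : Matrix (Fin 2) (Fin 2) R} :
    B.map (algebraMap R S) ∈ (⊥ : Subalgebra S (Matrix (Fin 2) (Fin 2) S)) ↔
      B ∈ (⊥ : Subalgebra R (Matrix (Fin 2) (Fin 2) R)) := by
  simp [matrix_fin_two_mem_bot_iff]

theorem sub_mul_sub_eq_zero_of_trace_det {R : Type*} [CommRing R] {A : Matrix (Fin 2) (Fin 2) R}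
    {α β : R} (htr : A.trace = α + β) (hdet : A.det = α * β) :
    (A - algebraMap R _ α) * (A - algebraMap R _ β) = 0 := by
  nontriviality R
  have hcharpoly : A.charpoly = (X - C α) * (X - C β) := by
    rw [Matrix.charpoly_fin_two, htr, hdet, map_add, map_mul]
    ring
  simpa [hcharpoly] using A.aeval_self_charpoly

theorem notMem_bot_of_trace_det {F : Type*} [Field F] {A : Matrix (Fin 2) (Fin 2) F} {α β : F}
    (hαβ : α ≠ β) (htr : A.trace = α + β) (hdet : A.det = α * β) :
    A ∉ (⊥ : Subalgebra F (Matrix (Fin 2) (Fin 2) F)) := by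
  intro hA
  obtain ⟨h01, -, hdiag⟩ := matrix_fin_two_mem_bot_iff.1 hA
  rw [Matrix.trace_fin_two, hdiag] at htr
  rw [Matrix.det_fin_two, h01, hdiag] at hdet
  have discriminant_eq_zero : (α - β) ^ 2 = 0 := by
    linear_combination 4 * hdet - (2 * A 1 1 + α + β) * htr
  exact hαβ (sub_eq_zero.1 (pow_eq_zero_iff two_ne_zero |>.1 discriminant_eq_zero))

theorem pow_mem_bot_iff_of_trace_det {K E : Type*} [Field K] [Field E] [Algebra K E]
    {A : Matrix (Fin 2) (Fin 2) K} {α β : E} (hαβ : α ≠ β)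
    (htr : algebraMap K E A.trace = α + β) (hdet : algebraMap K E A.det = α * β) (j : ℕ) :
    A ^ j ∈ (⊥ : Subalgebra K (Matrix (Fin 2) (Fin 2) K)) ↔ α ^ j = β ^ j := by
  have htr' : (A.map (algebraMap K E)).trace = α + β := by
    rw [← htr]
    exact (AddMonoidHom.map_trace (algebraMap K E) A).symm
  have hdet' : (A.map (algebraMap K E)).det = α * β := by
    rw [← hdet, RingHom.map_det, RingHom.mapMatrix_apply]
  rw [← matrix_fin_two_map_mem_bot_iff (S := E), Matrix.map_pow]
  have hnonscalar := notMem_bot_of_trace_det hαβ htr' hdet'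
  have hquadratic := sub_mul_sub_eq_zero_of_trace_det htr' hdet'
  exact pow_mem_bot_iff_of_sub_mul_sub_eq_zero hnonscalar hαβ hquadratic j

theorem ite_odd_dvd_two_mul_iff (n j : ℕ) :
    (if Odd n then n else 2 * n) ∣ 2 * j ↔ n ∣ j := by
  split_ifs with hodd
  · exact (Nat.coprime_two_right.2 hodd).dvd_mul_left
  · exact Nat.mul_dvd_mul_iff_left two_pos

theorem mul_pow_eq_mul_inv_pow_iff_dvd {F : Type*} [Field F] {n : ℕ} (hn : n ≠ 0) {ζ ρ : F}
    (hζ : IsPrimitiveRoot ζ (if Odd n then n else 2 * n)) (hρ : ρ ≠ 0) (j : ℕ) :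
    (ρ * ζ) ^ j = (ρ * ζ⁻¹) ^ j ↔ n ∣ j := by
  have hζ0 : ζ ≠ 0 := hζ.ne_zero (by split_ifs <;> omega)
  rw [mul_pow, mul_pow, mul_right_inj' (pow_ne_zero j hρ), inv_pow,
    ← mul_eq_one_iff_eq_inv₀ (pow_ne_zero j hζ0), ← pow_add, ← two_mul,
    hζ.pow_eq_one_iff_dvd, ite_odd_dvd_two_mul_iff]

theorem pow_mem_bot_iff_dvd_of_trace_det {K E : Type*} [Field K] [Field E] [Algebra K E]
    {n : ℕ} (hn : 1 < n) {ζ : E} (hζ : IsPrimitiveRoot ζ (if Odd n then n else 2 * n))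
    {r : K} (hr : r ≠ 0) {A : Matrix (Fin 2) (Fin 2) K}
    (htr : algebraMap K E A.trace = algebraMap K E r * (ζ + ζ⁻¹)) (hdet : A.det = r ^ 2) (j : ℕ) :
    A ^ j ∈ (⊥ : Subalgebra K (Matrix (Fin 2) (Fin 2) K)) ↔ n ∣ j := by
  have hζ0 : ζ ≠ 0 := hζ.ne_zero (by split_ifs <;> omega)
  have hr' : algebraMap K E r ≠ 0 := by simpa using hr
  have pow_eq_iff := mul_pow_eq_mul_inv_pow_iff_dvd (by omega) hζ hr'
  have eigenvalues_ne : algebraMap K E r * ζ ≠ algebraMap K E r * ζ⁻¹ := fun h ↦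
    hn.ne' (Nat.dvd_one.1 ((pow_eq_iff 1).1 (by rw [h])))
  rw [← pow_eq_iff, pow_mem_bot_iff_of_trace_det eigenvalues_ne (by rw [htr, mul_add])]
  rw [hdet, map_pow, mul_mul_mul_comm, mul_inv_cancel₀ hζ0, mul_one, sq]

end ScalarMatrix

section Mobius

variable {K E : Type*} [Field K] [Field E] [Algebra K E]

/-- The Möbius transform `B ∘ y` of an element `y` of a field extension of `K` by a matrix over `K`.
It is `0` where the denominator vanishes; for invertible `B` this can only happen for `y ∈ K`. -/
noncomputable def mobius (B : Matrix (Fin 2) (Fin 2) K) (y : E) : E :=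
  (algebraMap K E (B 0 0) * y + algebraMap K E (B 0 1)) /
    (algebraMap K E (B 1 0) * y + algebraMap K E (B 1 1))

/-- The sum `y + A ∘ y + ⋯ + A ^ (n - 1) ∘ y`; for `y = X` in `K(X)` this is the function `F` of the
theorem up to its constant `C`. -/
noncomputable def mobiusSum (A : Matrix (Fin 2) (Fin 2) K) (n : ℕ) (y : E) : E :=
  ∑ j ∈ range n, mobius (A ^ j) y

variable {y : E} {A B D : Matrix (Fin 2) (Fin 2) K}

@[simp]
theorem mobius_one (y : E) : mobius (1 : Matrix (Fin 2) (Fin 2) K) y = y := by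
  simp [mobius]

theorem map_mobius {E' : Type*} [Field E'] [Algebra K E'] (σ : E →ₐ[K] E')
    (B : Matrix (Fin 2) (Fin 2) K) (y : E) : σ (mobius B y) = mobius B (σ y) := by
  simp [mobius]

theorem linear_ne_zero_of_notMem_range (hy : y ∉ (algebraMap K E).range) {s t : K}
    (hst : s ≠ 0 ∨ t ≠ 0) : algebraMap K E s * y + algebraMap K E t ≠ 0 := by
  intro h
  have hs : s ≠ 0 := by
    rintro rfl
    simp_all
  have hs' : algebraMap K E s ≠ 0 := by simpa using hs
  refine hy ⟨-t / s, ?_⟩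
  rw [map_div₀, map_neg, div_eq_iff hs']
  linear_combination -h

theorem mobius_denom_ne_zero (hy : y ∉ (algebraMap K E).range) (hB : B.det ≠ 0) :
    algebraMap K E (B 1 0) * y + algebraMap K E (B 1 1) ≠ 0 := by
  refine linear_ne_zero_of_notMem_range hy ?_
  contrapose! hB
  simp [Matrix.det_fin_two, hB]

theorem mobius_notMem_range (hy : y ∉ (algebraMap K E).range) (hB : B.det ≠ 0) :
    mobius B y ∉ (algebraMap K E).range := by
  rintro ⟨k, hk⟩
  rw [mobius, eq_div_iff (mobius_denom_ne_zero hy hB)] at hk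
  refine linear_ne_zero_of_notMem_range hy (s := B 0 0 - k * B 1 0) (t := B 0 1 - k * B 1 1) ?_ ?_
  · contrapose! hB
    rw [Matrix.det_fin_two]
    linear_combination B 1 1 * hB.1 - B 1 0 * hB.2
  · simp only [map_sub, map_mul]
    linear_combination -hk

theorem mobius_mobius (hy : y ∉ (algebraMap K E).range) (hD : D.det ≠ 0) :
    mobius B (mobius D y) = mobius (B * D) y := by
  have hDy := mobius_denom_ne_zero hy hD
  have hmul : mobius D y * (algebraMap K E (D 1 0) * y + algebraMap K E (D 1 1)) =
      algebraMap K E (D 0 0) * y + algebraMap K E (D 0 1) := div_mul_cancel₀ _ hDy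
  rw [mobius, ← mul_div_mul_right _ _ hDy, mobius.eq_def (B * D)]
  simp only [Matrix.mul_apply, Fin.sum_univ_two, map_add, map_mul]
  congr 1
  · linear_combination algebraMap K E (B 0 0) * hmul
  · linear_combination algebraMap K E (B 1 0) * hmul

theorem iterate_mobius (hy : y ∉ (algebraMap K E).range) (hA : A.det ≠ 0) (j : ℕ) :
    (mobius A)^[j] y = mobius (A ^ j) y := by
  induction j with
  | zero => simp
  | succ j ih =>
    rw [Function.iterate_succ_apply', ih, mobius_mobius hy (by simp [Matrix.det_pow, hA]),
      pow_succ']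

theorem mobius_eq_self_of_mem_bot (hy : y ∉ (algebraMap K E).range) (hB : B.det ≠ 0)
    (hscalar : B ∈ (⊥ : Subalgebra K (Matrix (Fin 2) (Fin 2) K))) : mobius B y = y := by
  obtain ⟨h01, h10, hdiag⟩ := matrix_fin_two_mem_bot_iff.1 hscalar
  rw [mobius, div_eq_iff (mobius_denom_ne_zero hy hB), h01, h10, hdiag]
  simp [mul_comm]

theorem notMem_range_of_two_le_natDegree_minpoly (hy : 2 ≤ (minpoly K y).natDegree) :
    y ∉ (algebraMap K E).range := by
  rw [← minpoly.natDegree_eq_one_iff]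
  omega

theorem quadratic_coeff_eq_zero_of_aeval_eq_zero (hy : 3 ≤ (minpoly K y).natDegree) {s t u : K}
    (h : aeval y (C s * X ^ 2 + C t * X + C u) = 0) : s = 0 ∧ t = 0 ∧ u = 0 := by
  have hzero : C s * X ^ 2 + C t * X + C u = 0 := by
    by_contra hne
    have := natDegree_le_natDegree (minpoly.degree_le_of_ne_zero K y hne h)
    have := natDegree_quadratic_le (a := s) (b := t) (c := u)
    omega
  refine ⟨?_, ?_, ?_⟩
  · simpa [coeff_X, coeff_C] using congrArg (coeff · 2) hzero
  · simpa [coeff_X, coeff_C] using congrArg (coeff · 1) hzero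
  · simpa [coeff_X, coeff_C] using congrArg (coeff · 0) hzero

theorem mobius_eq_self_iff (hy : 3 ≤ (minpoly K y).natDegree) (hB : B.det ≠ 0) :
    mobius B y = y ↔ B ∈ (⊥ : Subalgebra K (Matrix (Fin 2) (Fin 2) K)) := by
  have hy' := notMem_range_of_two_le_natDegree_minpoly (le_of_lt hy)
  refine ⟨fun h ↦ ?_, mobius_eq_self_of_mem_bot hy' hB⟩
  rw [mobius, div_eq_iff (mobius_denom_ne_zero hy' hB)] at h
  obtain ⟨h10, hdiag, h01⟩ := quadratic_coeff_eq_zero_of_aeval_eq_zero hy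
    (s := B 1 0) (t := B 1 1 - B 0 0) (u := -B 0 1) (by
      simp only [map_add, map_mul, map_pow, aeval_C, aeval_X, map_sub, map_neg]
      linear_combination -h)
  exact matrix_fin_two_mem_bot_iff.2 ⟨neg_eq_zero.1 h01, h10, (sub_eq_zero.1 hdiag).symm⟩

theorem minimalPeriod_mobius {n : ℕ} (hy : 3 ≤ (minpoly K y).natDegree) (hA : A.det ≠ 0)
    (horder : ∀ j, A ^ j ∈ (⊥ : Subalgebra K (Matrix (Fin 2) (Fin 2) K)) ↔ n ∣ j) :
    Function.minimalPeriod (mobius A) y = n := by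
  refine Nat.dvd_right_iff_eq.1 fun j ↦ ?_
  rw [← Function.isPeriodicPt_iff_minimalPeriod_dvd, Function.IsPeriodicPt, Function.IsFixedPt,
    iterate_mobius (notMem_range_of_two_le_natDegree_minpoly (le_of_lt hy)) hA,
    mobius_eq_self_iff hy (by simp [Matrix.det_pow, hA]), horder]

theorem mobiusSum_mobius {n : ℕ} (hy : y ∉ (algebraMap K E).range) (hA : A.det ≠ 0)
    (hn : A ^ n ∈ (⊥ : Subalgebra K (Matrix (Fin 2) (Fin 2) K))) :
    mobiusSum A n (mobius A y) = mobiusSum A n y := by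
  have hpow (j : ℕ) : (A ^ j).det ≠ 0 := by simp [Matrix.det_pow, hA]
  have shift : mobiusSum A n (mobius A y) = ∑ j ∈ range n, mobius (A ^ (j + 1)) y :=
    sum_congr rfl fun j _ ↦ by rw [mobius_mobius hy hA, pow_succ]
  apply add_right_cancel (b := y)
  calc mobiusSum A n (mobius A y) + y
      = ∑ j ∈ range (n + 1), mobius (A ^ j) y := by
        rw [shift, sum_range_succ', pow_zero, mobius_one]
    _ = mobiusSum A n y + y := by
        rw [sum_range_succ, mobius_eq_self_of_mem_bot hy (hpow n) hn, mobiusSum]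

end Mobius

section Numerator

theorem sum_div_mul_prod {ι F : Type*} [DecidableEq ι] [Field F] {s : Finset ι} (p : ι → F)
    {q : ι → F} (hq : ∀ i ∈ s, q i ≠ 0) :
    (∑ i ∈ s, p i / q i) * ∏ i ∈ s, q i = ∑ i ∈ s, p i * ∏ k ∈ s.erase i, q k := by
  rw [sum_mul]
  refine sum_congr rfl fun i hi ↦ ?_
  rw [← mul_prod_erase s q hi, ← mul_assoc, div_mul_cancel₀ _ (hq i hi)]

variable {K E : Type*} [Field K] [Field E] [Algebra K E]

theorem aeval_eq_aeval_mul_sum_div {ι : Type*} {s : Finset ι} {p q : ι → K[X]} {f₁ f₂ : K[X]}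
    (hf₂ : f₂ ≠ 0)
    (h : ∑ i ∈ s, algebraMap K[X] (RatFunc K) (p i) / algebraMap K[X] (RatFunc K) (q i) =
      algebraMap K[X] (RatFunc K) f₁ / algebraMap K[X] (RatFunc K) f₂)
    {y : E} (hq : ∀ i ∈ s, aeval y (q i) ≠ 0) :
    aeval y f₁ = aeval y f₂ * ∑ i ∈ s, aeval y (p i) / aeval y (q i) := by
  classical
  have hq' (i) (hi : i ∈ s) : algebraMap K[X] (RatFunc K) (q i) ≠ 0 :=
    RatFunc.algebraMap_ne_zero fun h0 ↦ hq i hi (by rw [h0, map_zero])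
  have cleared : f₁ * ∏ i ∈ s, q i = f₂ * ∑ i ∈ s, p i * ∏ k ∈ s.erase i, q k := by
    apply RatFunc.algebraMap_injective K
    simp only [map_mul, map_sum, map_prod]
    rw [← sum_div_mul_prod _ hq', h]
    field_simp [RatFunc.algebraMap_ne_zero hf₂]
  apply mul_right_cancel₀ (prod_ne_zero_iff.2 hq)
  rw [mul_assoc, sum_div_mul_prod _ hq]
  simpa only [map_mul, map_sum, map_prod] using congrArg (aeval y) cleared

variable {A : Matrix (Fin 2) (Fin 2) K} {n : ℕ} {c : K} {f₁ f₂ : K[X]} {y : E}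

theorem aeval_eq_aeval_mul_mobiusSum_add (hA : A.det ≠ 0) (hf₂ : f₂ ≠ 0)
    (h : mobiusSum A n RatFunc.X + RatFunc.C c =
      algebraMap K[X] (RatFunc K) f₁ / algebraMap K[X] (RatFunc K) f₂)
    (hy : y ∉ (algebraMap K E).range) :
    aeval y f₁ = aeval y f₂ * (mobiusSum A n y + algebraMap K E c) := by
  have hf₂' := RatFunc.algebraMap_ne_zero hf₂
  have hsum : ∑ j ∈ range n,
      algebraMap K[X] (RatFunc K) (C ((A ^ j) 0 0) * X + C ((A ^ j) 0 1)) /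
        algebraMap K[X] (RatFunc K) (C ((A ^ j) 1 0) * X + C ((A ^ j) 1 1)) =
      algebraMap K[X] (RatFunc K) (f₁ - C c * f₂) / algebraMap K[X] (RatFunc K) f₂ := by
    simp only [map_add, map_sub, map_mul, RatFunc.algebraMap_C, RatFunc.algebraMap_X]
    rw [sub_div, mul_div_cancel_right₀ _ hf₂', ← h, add_sub_cancel_right]
    rfl
  have heval := aeval_eq_aeval_mul_sum_div hf₂ hsum (y := y) fun j _ ↦ by
    simpa using mobius_denom_ne_zero hy (B := A ^ j) (by simp [Matrix.det_pow, hA])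
  simp only [map_add, map_sub, map_mul, aeval_C, aeval_X] at heval
  rw [mul_add, mobiusSum]
  simp only [mobius]
  linear_combination heval

theorem aeval_mobius_eq_zero (hA : A.det ≠ 0)
    (hAn : A ^ n ∈ (⊥ : Subalgebra K (Matrix (Fin 2) (Fin 2) K)))
    (hcop : IsCoprime f₁ f₂) (hf₂ : f₂ ≠ 0)
    (h : mobiusSum A n RatFunc.X + RatFunc.C c =
      algebraMap K[X] (RatFunc K) f₁ / algebraMap K[X] (RatFunc K) f₂)
    (hy : y ∉ (algebraMap K E).range) (hroot : aeval y f₁ = 0) :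
    aeval (mobius A y) f₁ = 0 := by
  have hf₂y : aeval y f₂ ≠ 0 := by
    obtain ⟨u, v, huv⟩ := hcop
    intro h0
    simpa [hroot, h0] using congrArg (aeval y) huv
  have hFy : mobiusSum A n y + algebraMap K E c = 0 := by
    have heval := aeval_eq_aeval_mul_mobiusSum_add hA hf₂ h hy
    rw [hroot] at heval
    exact (mul_eq_zero.1 heval.symm).resolve_left hf₂y
  rw [aeval_eq_aeval_mul_mobiusSum_add hA hf₂ h (mobius_notMem_range hy hA),
    mobiusSum_mobius hy hA hAn, hFy, mul_zero]

end Numerator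

section SimpleExtension

variable {K E : Type*} [Field K] [Field E] [Algebra K E] {x : E}

theorem exists_gal_apply_gen_eq (hx : IsIntegral K x) {y : K⟮x⟯}
    (hy : aeval y (minpoly K x) = 0) : ∃ φ : Gal(K⟮x⟯/K), φ (AdjoinSimple.gen K x) = y := by
  have : FiniteDimensional K K⟮x⟯ := adjoin.finiteDimensional hx
  let σ : K⟮x⟯ →ₐ[K] K⟮x⟯ := (algHomAdjoinIntegralEquiv K hx).symm
    ⟨y, mem_aroots.2 ⟨minpoly.ne_zero hx, hy⟩⟩
  exact ⟨AlgEquiv.ofBijective σ (Algebra.IsAlgebraic.algHom_bijective σ),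
    algHomAdjoinIntegralEquiv_symm_apply_gen K hx _⟩

theorem gal_eq_one_of_apply_gen_eq {φ : Gal(K⟮x⟯/K)}
    (h : φ (AdjoinSimple.gen K x) = AdjoinSimple.gen K x) : φ = 1 := by
  have heq : (φ : K⟮x⟯ →ₐ[K] K⟮x⟯) = AlgHom.id K K⟮x⟯ :=
    adjoin_algHom_ext K fun y hy ↦ by
      obtain rfl : y = x := hy
      exact h
  exact AlgEquiv.ext fun y ↦ DFunLike.congr_fun heq y

theorem orderOf_eq_minimalPeriod_gen (φ : Gal(K⟮x⟯/K)) :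
    orderOf φ = Function.minimalPeriod φ (AdjoinSimple.gen K x) := by
  refine Nat.dvd_right_iff_eq.1 fun j ↦ ?_
  rw [orderOf_dvd_iff_pow_eq_one, ← Function.isPeriodicPt_iff_minimalPeriod_dvd,
    Function.IsPeriodicPt, Function.IsFixedPt, ← AlgEquiv.coe_pow]
  exact ⟨fun h ↦ by rw [h, AlgEquiv.one_apply], gal_eq_one_of_apply_gen_eq⟩

theorem orderOf_eq_minimalPeriod_mobius {A : Matrix (Fin 2) (Fin 2) K} {φ : Gal(K⟮x⟯/K)}
    (h : φ (AdjoinSimple.gen K x) = mobius A (AdjoinSimple.gen K x)) :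
    orderOf φ = Function.minimalPeriod (mobius A) (AdjoinSimple.gen K x) := by
  have hcomm : Function.Commute φ (mobius A) := map_mobius (φ : K⟮x⟯ →ₐ[K] K⟮x⟯) A
  rw [orderOf_eq_minimalPeriod_gen]
  refine Nat.dvd_right_iff_eq.1 fun j ↦ ?_
  simp only [← Function.isPeriodicPt_iff_minimalPeriod_dvd, Function.IsPeriodicPt,
    Function.IsFixedPt, hcomm.iterate_eq_of_map_eq j h]

theorem card_gal_eq_finrank_of_orderOf_eq_finrank {L : Type*} [Field L] [Algebra K L]
    [FiniteDimensional K L] {φ : Gal(L/K)} (h : orderOf φ = Module.finrank K L) :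
    Nat.card Gal(L/K) = Module.finrank K L := by
  refine le_antisymm ?_ (h ▸ Nat.le_of_dvd Nat.card_pos (orderOf_dvd_natCard φ))
  rw [Nat.card_eq_fintype_card]
  exact AlgEquiv.card_le

theorem aeval_eq_zero_iff_exists_of_injOn {f : K[X]} (hf : f ≠ 0) {x : ℕ → E}
    (hroot : ∀ j, aeval (x j) f = 0) (hinj : Set.InjOn x (Set.Iio f.natDegree)) (z : E) :
    aeval z f = 0 ↔ ∃ j < f.natDegree, z = x j := by
  classical
  have hroots : f.aroots E = ((range f.natDegree).image x).val := by
    refine roots_eq_of_natDegree_le_card_of_ne_zero ?_ ?_ (map_ne_zero hf)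
    · simp [eval_map_algebraMap, hroot]
    · rw [natDegree_map, card_image_of_injOn (by simpa using hinj), card_range]
  calc aeval z f = 0 ↔ z ∈ f.aroots E := by simp [hf]
    _ ↔ ∃ j < f.natDegree, z = x j := by simp [hroots, eq_comm]

theorem natDegree_minpoly_of_irreducible {f : K[X]} (hf : Irreducible f) (hx : aeval x f = 0) :
    (minpoly K x).natDegree = f.natDegree := by
  rw [← minpoly.eq_of_irreducible hf hx, natDegree_mul_C (by simpa using hf.ne_zero)]

end SimpleExtension

theorem aeval_eq_zero_iff_exists_mobius {K E : Type*} [Field K] [Field E] [Algebra K E]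
    {A : Matrix (Fin 2) (Fin 2) K} {f : K[X]} (hdeg : 3 ≤ f.natDegree) (hA : A.det ≠ 0)
    (horder : ∀ j, A ^ j ∈ (⊥ : Subalgebra K (Matrix (Fin 2) (Fin 2) K)) ↔ f.natDegree ∣ j)
    (hirr : Irreducible f) (hmobius : ∀ y : E, aeval y f = 0 → aeval (mobius A y) f = 0)
    {x : E} (hx : aeval x f = 0) (z : E) :
    aeval z f = 0 ↔ ∃ j < f.natDegree, z = mobius (A ^ j) x := by
  have hminpoly : 3 ≤ (minpoly K x).natDegree := by
    rwa [natDegree_minpoly_of_irreducible hirr hx]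
  simp only [← iterate_mobius (notMem_range_of_two_le_natDegree_minpoly (le_of_lt hminpoly)) hA]
  refine aeval_eq_zero_iff_exists_of_injOn hirr.ne_zero (fun j ↦ ?_) ?_ z
  · induction j with
    | zero => exact hx
    | succ j ih => exact Function.iterate_succ_apply' (mobius A) j x ▸ hmobius _ ih
  · rw [← minimalPeriod_mobius hminpoly hA horder]
    exact Function.iterate_injOn_Iio_minimalPeriod

theorem exists_gal_apply_gen_eq_mobius {K E : Type*} [Field K] [Field E] [Algebra K E]
    {A : Matrix (Fin 2) (Fin 2) K} {n : ℕ} {x : E} (hx : 3 ≤ (minpoly K x).natDegree)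
    (hA : A.det ≠ 0)
    (horder : ∀ j, A ^ j ∈ (⊥ : Subalgebra K (Matrix (Fin 2) (Fin 2) K)) ↔ n ∣ j)
    (hroot : aeval (mobius A (AdjoinSimple.gen K x)) (minpoly K x) = 0) :
    ∃ φ : Gal(K⟮x⟯/K),
      φ (AdjoinSimple.gen K x) = mobius A (AdjoinSimple.gen K x) ∧ orderOf φ = n := by
  have hint : IsIntegral K x := by
    by_contra h
    simp [minpoly.eq_zero h] at hx
  obtain ⟨φ, hφ⟩ := exists_gal_apply_gen_eq hint hroot
  refine ⟨φ, hφ, ?_⟩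
  rw [orderOf_eq_minimalPeriod_mobius hφ, minimalPeriod_mobius (by rwa [minpoly_gen]) hA horder]

/-- As `⊥` consists of the scalar matrices, `horder` says that `A` has order `n` in `PGL₂(K)`. -/
theorem stmt5_general {K E : Type*} [Field K] [Field E] [Algebra K E]
    {n : ℕ} (hn : 3 ≤ n) {A : Matrix (Fin 2) (Fin 2) K} (hA : A.det ≠ 0)
    (horder : ∀ j, A ^ j ∈ (⊥ : Subalgebra K (Matrix (Fin 2) (Fin 2) K)) ↔ n ∣ j)
    {c : K} {f₁ f₂ : K[X]} (hcop : IsCoprime f₁ f₂)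
    (hquot : mobiusSum A n RatFunc.X + RatFunc.C c =
      algebraMap K[X] (RatFunc K) f₁ / algebraMap K[X] (RatFunc K) f₂)
    (hirr : Irreducible f₁) (hdeg : f₁.natDegree = n) {x : E} (hx : aeval x f₁ = 0) :
    (∀ z : E, aeval z f₁ = 0 ↔ ∃ j < n, z = mobius (A ^ j) x) ∧
    IsGalois K K⟮x⟯ ∧
    ∃ φ : Gal(K⟮x⟯/K), (φ (AdjoinSimple.gen K x) : E) = mobius A x ∧ orderOf φ = n ∧
      ∀ ψ : Gal(K⟮x⟯/K), ψ ∈ Subgroup.zpowers φ := by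
  subst hdeg
  have hf₂ : f₂ ≠ 0 := by
    rintro rfl
    exact hirr.not_isUnit (isCoprime_zero_right.1 hcop)
  have hmobius {L : Type _} [Field L] [Algebra K L] (y : L) (hy : aeval y f₁ = 0) :
      aeval (mobius A y) f₁ = 0 :=
    aeval_mobius_eq_zero hA ((horder _).2 dvd_rfl) hcop hf₂ hquot
      (notMem_range_of_two_le_natDegree_minpoly <| by
        rw [natDegree_minpoly_of_irreducible hirr hy]; omega) hy
  have hminpoly := natDegree_minpoly_of_irreducible hirr hx
  have hint : IsIntegral K x := isAlgebraic_iff_isIntegral.1 ⟨f₁, hirr.ne_zero, hx⟩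
  have := adjoin.finiteDimensional hint
  have hgen : aeval (AdjoinSimple.gen K x) f₁ = 0 := by
    rwa [← (algebraMap K⟮x⟯ E).injective.eq_iff, ← aeval_algebraMap_apply, map_zero]
  obtain ⟨φ, hφ, hφn⟩ := exists_gal_apply_gen_eq_mobius (hminpoly ▸ hn) hA horder (by
    rw [← minpoly.eq_of_irreducible hirr hx, map_mul, hmobius _ hgen, zero_mul])
  have hfinrank : orderOf φ = Module.finrank K K⟮x⟯ := by
    rw [hφn, adjoin.finrank hint, hminpoly]
  have hcard := card_gal_eq_finrank_of_orderOf_eq_finrank hfinrank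
  have hzpowers : Subgroup.zpowers φ = ⊤ :=
    Subgroup.eq_top_of_card_eq _ (by rw [Nat.card_zpowers, hfinrank, hcard])
  exact ⟨aeval_eq_zero_iff_exists_mobius hn hA horder hirr hmobius hx,
    .of_card_aut_eq_finrank K _ hcard, φ, hφ ▸ map_mobius K⟮x⟯.val A _, hφn,
    fun ψ ↦ hzpowers ▸ Subgroup.mem_top ψ⟩

/-- **Theorem 1.** Let `K ⊆ ℂ`, `n ≥ 3`, `N = n` (`n` odd) or `2n` (`n` even),
`ζ` a primitive `N`-th root of unity, `r ∈ K` nonzero, and `A = [[a,b],[c,d]] ∈ GL(2,K)` with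
trace `r(ζ + ζ⁻¹)` and determinant `r²`.  Let `F = X + A∘X + ⋯ + A^{n-1}∘X + C = f₁/f₂`
with `f₁, f₂` coprime, and suppose `f₁` is irreducible of degree `n`.  For a root `x₁ ∈ ℂ`
of `f₁` put `x j = A^j ∘ x₁`.  Then `x 0, …, x (n-1)` are exactly the complex roots of `f₁`,
`K[x₁]` is Galois over `K`, and its Galois group is cyclic of order `n`, generated by the
automorphism sending `x₁` to `x 1 = A ∘ x₁`. -/
theorem stmt5 (K : Subfield ℂ) (n : ℕ) (hn : 3 ≤ n) (N : ℕ)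
    (hN : N = if Odd n then n else 2 * n) (ζ : ℂ) (hζ : IsPrimitiveRoot ζ N)
    (r : K) (hr : r ≠ 0) (a b c d : K)
    (htr : ((a : ℂ) + (d : ℂ)) = (r : ℂ) * (ζ + ζ⁻¹))
    (hdet : a * d - b * c = r ^ 2)
    (C : K) (A : Matrix (Fin 2) (Fin 2) K) (hA : A = !![a, b; c, d])
    (F : RatFunc K)
    (hF : F = (∑ j ∈ Finset.range n,
        (RatFunc.C ((A ^ j) 0 0) * RatFunc.X + RatFunc.C ((A ^ j) 0 1)) /
          (RatFunc.C ((A ^ j) 1 0) * RatFunc.X + RatFunc.C ((A ^ j) 1 1))) + RatFunc.C C)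
    (f₁ f₂ : Polynomial K) (hcop : IsCoprime f₁ f₂)
    (hquot : F = algebraMap (Polynomial K) (RatFunc K) f₁ /
        algebraMap (Polynomial K) (RatFunc K) f₂)
    (hirr : Irreducible f₁) (hdeg : f₁.natDegree = n)
    (x₁ : ℂ) (hx₁ : Polynomial.aeval x₁ f₁ = 0)
    (M : Matrix (Fin 2) (Fin 2) ℂ) (hM : M = !![(a : ℂ), (b : ℂ); (c : ℂ), (d : ℂ)])
    (x : ℕ → ℂ)
    (hx : ∀ j : ℕ,
      x j = ((M ^ j) 0 0 * x₁ + (M ^ j) 0 1) / ((M ^ j) 1 0 * x₁ + (M ^ j) 1 1)) :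
    (∀ z : ℂ, Polynomial.aeval z f₁ = 0 ↔ ∃ j < n, z = x j) ∧
    IsGalois K (IntermediateField.adjoin K {x₁}) ∧
    ∃ φ : (IntermediateField.adjoin K {x₁}) ≃ₐ[K] (IntermediateField.adjoin K {x₁}),
      (φ ⟨x₁, IntermediateField.subset_adjoin K {x₁} rfl⟩ : ℂ) = x 1 ∧
      orderOf φ = n ∧
      ∀ ψ : (IntermediateField.adjoin K {x₁}) ≃ₐ[K] (IntermediateField.adjoin K {x₁}),
        ψ ∈ Subgroup.zpowers φ := by
  subst hN hF hA
  have hmap : M = !![a, b; c, d].map (algebraMap K ℂ) :=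
    hM.trans (Matrix.eta_fin_two (!![a, b; c, d].map (algebraMap K ℂ))).symm
  obtain rfl : x = fun j ↦ mobius (!![a, b; c, d] ^ j) x₁ := funext fun j ↦ by
    rw [hx, hmap, ← Matrix.map_pow]
    rfl
  have horder := pow_mem_bot_iff_dvd_of_trace_det (A := !![a, b; c, d]) (by omega) hζ hr
    (by simpa using! htr) (by simpa using hdet)
  simpa only [pow_one] using! stmt5_general hn (by simp [hdet, hr]) horder hcop hquot hirr hdeg hx₁
end
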